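/- For every m ≥ 2, the supremum of the mutual information over quantizers with m thresholds is at least the supremum over quantizers with m−1 thresholds: sup{ I_m(h) : h ∈ ℝ^m, h1 < … < hm } ≥ sup{ I_{m−1}(z) : z ∈ ℝ^{m−1}, z1 < … < z_{m−1} }. In particular, if h* attains the maximum of I_m over strictly ordered m-vectors and z* attains the maximum of I_{m−1} over strictly ordered (m−1)-vectors, then I_m(h*) ≥ I_{m−1}(z*). -/

import Mathlib

/-!
Append to a strictly ordered vector `z` one further threshold `T` above all the others. The two
quantizers then differ only on `[T, ∞)`, whose mass under either density vanishes as `T → ∞`; hence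
by dominated convergence (`tendsto_A11_snoc`, `tendsto_A22_snoc`) and continuity of the binary
entropy, the mutual information of the longer vector tends to that of `z` (`tendsto_MI_snoc`).
So every upper bound for the mutual information with one more threshold also bounds the mutual
information of `z`. This settles both claims, since the mutual information is at most `log 2`
(`MI_le_log_two`), which makes the supremum on the right an honest least upper bound.
-/

open MeasureTheory Real Set Filter

/-- Binary entropy function. -/
noncomputable def Hb (w : ℝ) : ℝ := -(w * Real.log w) - (1 - w) * Real.log (1 - w)

/-- The union of the odd-indexed pieces of the partition of ℝ induced by the
thresholds `h 0 < h 1 < ⋯ < h (n-1)`, i.e. `(-∞, h 0) ∪ [h 1, h 2) ∪ ⋯`: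
a point `y` belongs to it iff the number of thresholds `≤ y` is even. -/
def oddUnion {n : ℕ} (h : Fin n → ℝ) : Set ℝ :=
  {y | Even (Finset.univ.filter (fun i => h i ≤ y)).card}

noncomputable def A11 (φ0 : ℝ → ℝ) {n : ℕ} (h : Fin n → ℝ) : ℝ := ∫ y in oddUnion h, φ0 y

noncomputable def A22 (φ1 : ℝ → ℝ) {n : ℕ} (h : Fin n → ℝ) : ℝ := ∫ y in (oddUnion h)ᶜ, φ1 y

noncomputable def q0 (p0 p1 : ℝ) (φ0 φ1 : ℝ → ℝ) {n : ℕ} (h : Fin n → ℝ) : ℝ :=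
  p0 * A11 φ0 h + p1 * (1 - A22 φ1 h)

/-- Mutual information of the quantizer with thresholding vector `h`. -/
noncomputable def MI (p0 p1 : ℝ) (φ0 φ1 : ℝ → ℝ) {n : ℕ} (h : Fin n → ℝ) : ℝ :=
  Hb (q0 p0 p1 φ0 φ1 h) - p0 * Hb (A11 φ0 h) - p1 * Hb (A22 φ1 h)

lemma Hb_eq_binEntropy : Hb = Real.binEntropy := by
  funext w
  simp only [Hb, Real.binEntropy, Real.log_inv]
  ring

lemma measurableSet_oddUnion {n : ℕ} (h : Fin n → ℝ) : MeasurableSet (oddUnion h) := by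
  have hm : Measurable (fun y : ℝ => ∑ i : Fin n, if h i ≤ y then (1 : ℕ) else 0) :=
    Finset.measurable_sum _ fun i _ =>
      Measurable.ite measurableSet_Ici measurable_const measurable_const
  have he : oddUnion h = (fun y : ℝ => ∑ i : Fin n, if h i ≤ y then (1 : ℕ) else 0) ⁻¹'
      {k | Even k} := by
    ext y
    simp only [oddUnion, Finset.card_filter, Set.mem_ofPred_eq, Set.mem_preimage]
  rw [he]
  exact hm (MeasurableSet.of_discrete)

lemma mem_oddUnion_snoc {n : ℕ} (z : Fin n → ℝ) {T y : ℝ} (hy : y < T) :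
    y ∈ oddUnion (Fin.snoc z T : Fin (n + 1) → ℝ) ↔ y ∈ oddUnion z := by
  simp only [oddUnion, Set.mem_ofPred_eq, Finset.card_filter, Fin.sum_univ_castSucc,
    Fin.snoc_castSucc, Fin.snoc_last, not_le.mpr hy, if_false, add_zero]

/-- Dominated convergence for sets that eventually agree, at each point, with a limit set. -/
lemma tendsto_setIntegral_of_eventually_mem_iff {φ : ℝ → ℝ} (hi : Integrable φ)
    {S : ℝ → Set ℝ} {S' : Set ℝ} (hS : ∀ T, MeasurableSet (S T)) (hS' : MeasurableSet S')
    (h : ∀ y, ∀ᶠ T in atTop, (y ∈ S T ↔ y ∈ S')) :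
    Tendsto (fun T => ∫ y in S T, φ y) atTop (nhds (∫ y in S', φ y)) := by
  simp only [← integral_indicator (hS _), ← integral_indicator hS']
  refine tendsto_integral_filter_of_dominated_convergence (fun y => ‖φ y‖)
    (Eventually.of_forall fun T => (hi.indicator (hS T)).aestronglyMeasurable)
    (Eventually.of_forall fun T => Eventually.of_forall fun y => norm_indicator_le_norm_self _ _)
    hi.norm (Eventually.of_forall fun y => ?_)
  refine tendsto_const_nhds.congr' ?_
  filter_upwards [h y] with T hT
  by_cases hy : y ∈ S' <;> simp [hT, hy]

lemma tendsto_A11_snoc {φ : ℝ → ℝ} (hi : Integrable φ) {n : ℕ} (z : Fin n → ℝ) :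
    Tendsto (fun T => A11 φ (Fin.snoc z T : Fin (n + 1) → ℝ)) atTop (nhds (A11 φ z)) :=
  tendsto_setIntegral_of_eventually_mem_iff hi (fun _ => measurableSet_oddUnion _)
    (measurableSet_oddUnion z) fun y => (eventually_gt_atTop y).mono fun _ hT =>
      mem_oddUnion_snoc z hT

lemma tendsto_A22_snoc {φ : ℝ → ℝ} (hi : Integrable φ) {n : ℕ} (z : Fin n → ℝ) :
    Tendsto (fun T => A22 φ (Fin.snoc z T : Fin (n + 1) → ℝ)) atTop (nhds (A22 φ z)) :=
  tendsto_setIntegral_of_eventually_mem_iff hi (fun _ => (measurableSet_oddUnion _).compl)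
    (measurableSet_oddUnion z).compl fun y => (eventually_gt_atTop y).mono fun _ hT =>
      not_congr (mem_oddUnion_snoc z hT)

lemma tendsto_MI_snoc (p0 p1 : ℝ) {φ0 φ1 : ℝ → ℝ} (hi0 : Integrable φ0) (hi1 : Integrable φ1)
    {n : ℕ} (z : Fin n → ℝ) :
    Tendsto (fun T => MI p0 p1 φ0 φ1 (Fin.snoc z T : Fin (n + 1) → ℝ)) atTop
      (nhds (MI p0 p1 φ0 φ1 z)) := by
  have hc : Continuous Hb := Hb_eq_binEntropy ▸ Real.binEntropy_continuous
  have h0 := tendsto_A11_snoc hi0 z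
  have h1 := tendsto_A22_snoc hi1 z
  have hq := (h0.const_mul p0).add ((h1.const_sub 1).const_mul p1)
  exact (((hc.tendsto _).comp hq).sub (((hc.tendsto _).comp h0).const_mul p0)).sub
    (((hc.tendsto _).comp h1).const_mul p1)

lemma strictMono_snoc {n : ℕ} {z : Fin (n + 1) → ℝ} (hz : StrictMono z) {T : ℝ}
    (hT : z (Fin.last n) < T) : StrictMono (Fin.snoc z T : Fin (n + 2) → ℝ) := by
  rw [Fin.strictMono_iff_lt_succ]
  intro i
  refine Fin.lastCases ?_ (fun j => ?_) i
  · simpa using hT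
  · rw [← Fin.castSucc_succ, Fin.snoc_castSucc, Fin.snoc_castSucc]
    exact hz Fin.castSucc_lt_succ

/-- An upper bound for the mutual information with one more threshold is inherited by the limit
in `tendsto_MI_snoc`. -/
lemma MI_le_of_forall_le {p0 p1 : ℝ} {φ0 φ1 : ℝ → ℝ} (hi0 : Integrable φ0)
    (hi1 : Integrable φ1) {n : ℕ} {z : Fin (n + 1) → ℝ} (hz : StrictMono z) {B : ℝ}
    (hB : ∀ h : Fin (n + 2) → ℝ, StrictMono h → MI p0 p1 φ0 φ1 h ≤ B) :
    MI p0 p1 φ0 φ1 z ≤ B :=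
  le_of_tendsto (tendsto_MI_snoc p0 p1 hi0 hi1 z)
    ((eventually_gt_atTop (z (Fin.last n))).mono fun _ hT => hB _ (strictMono_snoc hz hT))

lemma setIntegral_mem_Icc {φ : ℝ → ℝ} (hφ : ∀ y, 0 ≤ φ y) (hi : Integrable φ)
    (hI : ∫ y, φ y = 1) (S : Set ℝ) : ∫ y in S, φ y ∈ Set.Icc (0 : ℝ) 1 :=
  ⟨integral_nonneg hφ, hI ▸ setIntegral_le_integral hi (Eventually.of_forall hφ)⟩

lemma MI_le_log_two {p0 p1 : ℝ} (hp0 : 0 ≤ p0) (hp1 : 0 ≤ p1) {φ0 φ1 : ℝ → ℝ}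
    (hφ0 : ∀ y, 0 ≤ φ0 y) (hφ1 : ∀ y, 0 ≤ φ1 y) (hi0 : Integrable φ0) (hi1 : Integrable φ1)
    (hI0 : ∫ y, φ0 y = 1) (hI1 : ∫ y, φ1 y = 1) {n : ℕ} (h : Fin n → ℝ) :
    MI p0 p1 φ0 φ1 h ≤ Real.log 2 := by
  obtain ⟨ha, ha'⟩ := setIntegral_mem_Icc hφ0 hi0 hI0 (oddUnion h)
  obtain ⟨hb, hb'⟩ := setIntegral_mem_Icc hφ1 hi1 hI1 (oddUnion h)ᶜ
  have h0 := mul_nonneg hp0 (Real.binEntropy_nonneg ha ha')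
  have h1 := mul_nonneg hp1 (Real.binEntropy_nonneg hb hb')
  have hq := Real.binEntropy_le_log_two (p := q0 p0 p1 φ0 φ1 h)
  simp only [MI, Hb_eq_binEntropy, A11, A22]
  linarith

/-- with `m = n + 2 ≥ 2`, the supremum of the mutual information over
strictly ordered `m`-vectors is at least the supremum over strictly ordered
`(m-1)`-vectors; in particular a maximizer with `m` thresholds is at least as
good as a maximizer with `m - 1` thresholds. -/
theorem stmt_3
    (p0 p1 : ℝ) (hp0 : p0 ∈ Set.Ioo (0:ℝ) 1) (hp1 : p1 ∈ Set.Ioo (0:ℝ) 1)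
    (hp : p0 + p1 = 1)
    (φ0 φ1 : ℝ → ℝ) (hφ0 : ∀ y, 0 ≤ φ0 y) (hφ1 : ∀ y, 0 ≤ φ1 y)
    (hi0 : Integrable φ0) (hi1 : Integrable φ1)
    (hI0 : ∫ y, φ0 y = 1) (hI1 : ∫ y, φ1 y = 1)
    (n : ℕ) :
    sSup {x : ℝ | ∃ z : Fin (n + 1) → ℝ, StrictMono z ∧ MI p0 p1 φ0 φ1 z = x} ≤
      sSup {x : ℝ | ∃ h : Fin (n + 2) → ℝ, StrictMono h ∧ MI p0 p1 φ0 φ1 h = x} ∧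
    ∀ (hstar : Fin (n + 2) → ℝ) (zstar : Fin (n + 1) → ℝ),
      StrictMono hstar → StrictMono zstar →
      IsMaxOn (fun h : Fin (n + 2) → ℝ => MI p0 p1 φ0 φ1 h)
        {h : Fin (n + 2) → ℝ | StrictMono h} hstar →
      IsMaxOn (fun z : Fin (n + 1) → ℝ => MI p0 p1 φ0 φ1 z)
        {z : Fin (n + 1) → ℝ | StrictMono z} zstar →
      MI p0 p1 φ0 φ1 zstar ≤ MI p0 p1 φ0 φ1 hstar := by
  refine ⟨csSup_le ?_ ?_, ?_⟩
  · exact ⟨_, fun i => ((i : ℕ) : ℝ), fun i j hij => Nat.cast_lt.mpr hij, rfl⟩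
  · rintro x ⟨z, hz, rfl⟩
    refine MI_le_of_forall_le hi0 hi1 hz fun h hh => le_csSup ⟨Real.log 2, ?_⟩ ⟨h, hh, rfl⟩
    rintro y ⟨w, -, rfl⟩
    exact MI_le_log_two hp0.1.le hp1.1.le hφ0 hφ1 hi0 hi1 hI0 hI1 w
  · intro hstar zstar _ hz hmax _
    exact MI_le_of_forall_le hi0 hi1 hz fun h hh => hmax hh
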